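/- Let K be a field of characteristic p > 0 with p dividing n, where n ≥ 2, let a_1, …, a_{n−1} ∈ K with a_{n−1} ≠ 0, and put f(x) = x^n + a_{n−1}x^{n−1} + ⋯ + a_1 x. Then, in K̄[t], disc_x(f(x)+t) = (−1)^{n(n−1)/2} · a_{n−1}^n · ∏_ρ (t + f(ρ)), where the product runs over the n−2 roots ρ of f′(x) in an algebraic closure K̄ of K, counted with multiplicity. In particular disc_x(f(x)+t) is a polynomial of degree exactly n−2 in t. -/

import Mathlib

/-!
Write `P = f + t`, a monic polynomial in `x` of degree `n` over `L[t]`, with `L` the algebraic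
closure of `K`. Its derivative is `f'`, of degree `n - 2` and leading coefficient
`(n - 1) a_{n-1} = -a_{n-1}`, because `n = 0` in `K`. Reversing rows and columns turns the
Sylvester matrix `sylvesterMatrix` into the transpose of Mathlib's, so that the discriminant is,
up to the sign `(-1)^(n(n-1)/2)`, the Mathlib resultant of `P` and `f'` in formal degrees `n` and
`n - 1`. As `P` is monic, the second formal degree may be lowered to the true degree `n - 2`.
Swapping the arguments costs `(-1)^(n(n-2))`, and the product formula over the roots of the split
polynomial `f'` gives `(-a_{n-1})^n ∏ P(ρ)`. The signs cancel since `n(n-2) + n = n(n-1)` is even.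
-/


open Polynomial

noncomputable section
open scoped Classical

/-- The Sylvester matrix of `P` and `Q` with respect to formal degrees `m` and `n`. -/
def sylvesterMatrix {R : Type*} [CommRing R] (m n : ℕ) (P Q : Polynomial R) :
    Matrix (Fin (n + m)) (Fin (n + m)) R :=
  Matrix.of fun i j =>
    if (i : ℕ) < n then
      (if (i : ℕ) ≤ (j : ℕ) ∧ (j : ℕ) ≤ (i : ℕ) + m then P.coeff (m + i - j) else 0)
    else
      (if (i : ℕ) - n ≤ (j : ℕ) ∧ (j : ℕ) ≤ (i : ℕ) then Q.coeff ((i : ℕ) - j) else 0)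

/-- The resultant of `P` and `Q` with respect to formal degrees `m` and `n`:
the determinant of the `(m+n) × (m+n)` Sylvester matrix. -/
def presultant {R : Type*} [CommRing R] (m n : ℕ) (P Q : Polynomial R) : R :=
  (sylvesterMatrix m n P Q).det

/-- The discriminant of a polynomial `P` of degree `m`; for monic `P` this agrees with the
standard discriminant `∏_{i<j} (r_i - r_j)²` over the roots of `P` in an algebraic closure. -/
def pdisc {R : Type*} [CommRing R] (P : Polynomial R) : R :=
  (-1) ^ (P.natDegree * (P.natDegree - 1) / 2) *
    presultant P.natDegree (P.natDegree - 1) P (Polynomial.derivative P)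

/-- `Dpoly g` is `D_g(t) = disc_x (g(x) + t)`, a polynomial in `t`. -/
def Dpoly {R : Type*} [CommRing R] (g : Polynomial R) : Polynomial R :=
  pdisc (g.map Polynomial.C + Polynomial.C Polynomial.X)

/-- `fPoly n a = x^n + a_{n-1} x^{n-1} + ... + a_1 x`. -/
def fPoly {R : Type*} [CommRing R] (n : ℕ) (a : Fin (n - 1) → R) : Polynomial R :=
  X ^ n + ∑ i : Fin (n - 1), Polynomial.C (a i) * X ^ ((i : ℕ) + 1)

/-- Reversing the order of rows and columns identifies the two conventions for Sylvester matrices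
up to transposition, with no sign in the determinant. -/
lemma presultant_eq_resultant {R : Type*} [CommRing R] (m n : ℕ) (P Q : Polynomial R) :
    presultant m n P Q = resultant P Q m n := by
  rw [presultant, resultant, ← Matrix.det_transpose (sylvester P Q m n),
    ← Matrix.det_submatrix_equiv_self ((finCongr (add_comm n m)).trans Fin.revPerm)]
  congr 1
  ext i j
  obtain ⟨k, rfl⟩ : ∃ k : Fin (m + n), i = (Fin.rev k).cast (add_comm m n) :=
    ⟨Fin.rev (i.cast (add_comm n m)), by simp⟩
  simp only [Matrix.submatrix_apply, Matrix.transpose_apply, sylvester, sylvesterMatrix,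
    Matrix.of_apply, Equiv.trans_apply, finCongr_apply, Fin.revPerm_apply, Fin.cast_cast,
    Fin.cast_eq_self, Fin.rev_rev, Fin.val_cast, Fin.val_rev, Set.mem_Icc]
  have hj := j.isLt
  induction k using Fin.addCases with
  | left k =>
    have hk := k.isLt
    rw [Fin.addCases_left, if_neg (by simp only [Fin.val_castAdd]; omega)]
    simp only [Fin.val_castAdd]
    split_ifs
    · congr 1; omega
    · omega
    · omega
    · rfl
  | right k =>
    have hk := k.isLt
    rw [Fin.addCases_right, if_pos (by simp only [Fin.val_natAdd]; omega)]
    simp only [Fin.val_natAdd]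
    split_ifs
    · congr 1; omega
    · omega
    · omega
    · rfl

lemma natDegree_fPoly_sum_lt {R : Type*} [CommRing R] (n : ℕ) (hn : 2 ≤ n)
    (a : Fin (n - 1) → R) :
    (∑ i : Fin (n - 1), C (a i) * X ^ ((i : ℕ) + 1)).natDegree < n := by
  have : (∑ i : Fin (n - 1), C (a i) * X ^ ((i : ℕ) + 1)).natDegree ≤ n - 1 := by
    refine natDegree_sum_le_of_forall_le _ _ fun i _ => ?_
    exact (natDegree_C_mul_X_pow_le _ _).trans (by omega)
  omega

lemma fPoly_monic {R : Type*} [CommRing R] (n : ℕ) (hn : 2 ≤ n)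
    (a : Fin (n - 1) → R) : (fPoly n a).Monic := by
  refine monic_X_pow_add ?_
  exact degree_le_natDegree.trans_lt (by exact_mod_cast natDegree_fPoly_sum_lt n hn a)

lemma natDegree_fPoly {R : Type*} [CommRing R] [Nontrivial R] (n : ℕ) (hn : 2 ≤ n)
    (a : Fin (n - 1) → R) : (fPoly n a).natDegree = n := by
  rw [fPoly, natDegree_add_eq_left_of_natDegree_lt] <;> rw [natDegree_X_pow]
  exact natDegree_fPoly_sum_lt n hn a

lemma coeff_fPoly_pred {R : Type*} [CommRing R] (n : ℕ) (hn : 2 ≤ n)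
    (a : Fin (n - 1) → R) : (fPoly n a).coeff (n - 1) = a ⟨n - 2, by omega⟩ := by
  rw [fPoly, coeff_add, coeff_X_pow, if_neg (by omega), zero_add, finsetSum_coeff,
    Finset.sum_eq_single ⟨n - 2, by omega⟩]
  · rw [coeff_C_mul, coeff_X_pow, if_pos (by simp only; omega), mul_one]
  · intro i _ hi
    rw [coeff_C_mul, coeff_X_pow, if_neg, mul_zero]
    intro h
    exact hi (Fin.ext (by simp only; omega))
  · simp

/-- When `n = 0` in `K`, the term `n x^(n-1)` of `f'` disappears and the next one, with coefficient
`(n - 1) a_{n-1} = -a_{n-1}`, becomes the leading one. -/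
lemma coeff_derivative_of_natCast_eq_zero {K : Type*} [Field K] {n : ℕ} (hn : 2 ≤ n)
    (hnK : (n : K) = 0) (f : K[X]) (hf : f.natDegree = n) :
    f.derivative.natDegree ≤ n - 2 ∧ f.derivative.coeff (n - 2) = -f.coeff (n - 1) := by
  obtain ⟨m, rfl⟩ := Nat.exists_eq_add_of_le' hn
  constructor
  · rw [natDegree_le_iff_coeff_eq_zero]
    intro N hN
    rw [coeff_derivative]
    obtain h | h : N = m + 1 ∨ m + 2 < N + 1 := by omega
    · subst h
      have : (((m + 1 : ℕ) : K) + 1) = 0 := by rw [← hnK]; push_cast; ring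
      rw [this, mul_zero]
    · rw [coeff_eq_zero_of_natDegree_lt (by omega), zero_mul]
  · have : ((m : K) + 1) = -1 := by
      have h : (m : K) + 2 = 0 := by exact_mod_cast hnK
      linear_combination h
    simp only [Nat.add_sub_cancel, coeff_derivative, this,
      show m + 2 - 1 = m + 1 by omega, mul_neg, mul_one]

/-- The discriminant formula over a field where the derivative splits, for a monic polynomial `f`
whose degree `n` vanishes in the field. -/
lemma Dpoly_eq_prod_of_splits {L : Type*} [Field L] {n : ℕ} (hn : 2 ≤ n)
    (hnL : (n : L) = 0) (f : L[X]) (hf : f.natDegree = n) (hm : f.Monic)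
    (ha : f.coeff (n - 1) ≠ 0) (hs : f.derivative.Splits) :
    Dpoly f = (-1) ^ (n * (n - 1) / 2) * C (f.coeff (n - 1)) ^ n *
      (f.derivative.roots.map fun ρ => X + C (f.eval ρ)).prod := by
  obtain ⟨hle, hco⟩ := coeff_derivative_of_natCast_eq_zero hn hnL f hf
  have hdeg : f.derivative.natDegree = n - 2 :=
    le_antisymm hle (le_natDegree_of_ne_zero (by rw [hco]; exact neg_ne_zero.mpr ha))
  set P : L[X][X] := f.map C + C X with hP
  have hPdeg : P.natDegree = n := by
    rw [hP, natDegree_add_C, natDegree_map_eq_of_injective C_injective, hf]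
  have hPco : P.coeff n = 1 := by
    rw [hP, coeff_add, coeff_C, if_neg (by omega), add_zero, coeff_map, ← hf,
      hm.coeff_natDegree, map_one]
  have hPd : P.derivative = f.derivative.map C := by simp [hP, derivative_map]
  have hdeg' : (f.derivative.map (C : L →+* L[X])).natDegree = n - 2 := by
    rw [natDegree_map_eq_of_injective C_injective, hdeg]
  have hlc : (f.derivative.map (C : L →+* L[X])).leadingCoeff = -C (f.coeff (n - 1)) := by
    rw [← coeff_natDegree, hdeg', coeff_map, hco, map_neg]
  have hres := resultant_eq_prod_eval (f.derivative.map (C : L →+* L[X])) P n hPdeg.le (hs.map C)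
  rw [hdeg', hlc, hs.roots_map_of_injective C_injective, Multiset.map_map] at hres
  simp only [Function.comp_def] at hres
  have hroots : (f.derivative.roots.map fun ρ => eval (C ρ) P) =
      f.derivative.roots.map fun ρ => X + C (f.eval ρ) := by
    refine Multiset.map_congr rfl fun ρ _ => ?_
    simp [hP, add_comm]
  have hsign : ((-1) ^ (n * (n - 2)) * (-1) ^ n : L[X]) = 1 := by
    rw [← pow_add, ← Nat.mul_succ, show (n - 2).succ = n - 1 by omega]
    exact (Nat.even_mul_pred_self n).neg_one_pow
  rw [Dpoly, pdisc, ← hP, hPdeg, presultant_eq_resultant, hPd,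
    show n - 1 = n - 2 + 1 by omega, resultant_add_right_deg _ _ _ _ _ hdeg'.le, hPco, one_pow,
    one_mul, resultant_comm, hres, show n - 2 + 1 = n - 1 by omega]
  rw [← hroots, neg_pow (C (f.coeff (n - 1)))]
  linear_combination (-1) ^ (n * (n - 1) / 2) * C (f.coeff (n - 1)) ^ n *
    (f.derivative.roots.map fun ρ => eval (C ρ) P).prod * hsign

/-- The discriminant of a polynomial commutes with field extension. -/
lemma Dpoly_map {K L : Type*} [Field K] [Field L] (φ : K →+* L) (f : K[X]) :
    (Dpoly f).map φ = Dpoly (f.map φ) := by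
  have h : (f.map φ).map C + C X = (f.map C + C X).map (mapRingHom φ) := by
    simp [Polynomial.map_map, mapRingHom_comp_C]
  have hd : ((f.map C + C X).map (mapRingHom φ)).natDegree = (f.map C + C X).natDegree :=
    natDegree_map_eq_of_injective (map_injective φ φ.injective) _
  rw [Dpoly, Dpoly, h, pdisc, pdisc, hd, derivative_map, presultant_eq_resultant,
    presultant_eq_resultant, resultant_map_map]
  simp

/-- For a field `K` of characteristic `p > 0` dividing `n` and
`f(x) = x^n + a_{n-1}x^{n-1} + ⋯ + a_1 x` with `a_{n-1} ≠ 0`, one has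
`disc_x(f(x)+t) = (-1)^{n(n-1)/2} a_{n-1}^n ∏_ρ (t + f(ρ))` in `K̄[t]`, the product running
over the `n-2` roots `ρ` of `f'` in an algebraic closure `K̄`, counted with multiplicity.
In particular `disc_x(f(x)+t)` has degree exactly `n-2` in `t`. -/
theorem Dpoly_eq_prod_of_char_dvd (n p : ℕ) (hn : 2 ≤ n) (K : Type) [Field K]
    [CharP K p] (hp : 0 < p) (hpn : p ∣ n) (a : Fin (n - 1) → K)
    (ha : a ⟨n - 2, by omega⟩ ≠ 0) :
    (Dpoly (fPoly n a)).map (algebraMap K (AlgebraicClosure K)) =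
      (-1) ^ (n * (n - 1) / 2) *
        Polynomial.C (algebraMap K (AlgebraicClosure K) (a ⟨n - 2, by omega⟩)) ^ n *
        (((Polynomial.derivative (fPoly n a)).aroots (AlgebraicClosure K)).map
          fun ρ => Polynomial.X + Polynomial.C (Polynomial.aeval ρ (fPoly n a))).prod ∧
    (Dpoly (fPoly n a)).natDegree = n - 2 := by
  have hnK : (n : K) = 0 := (CharP.cast_eq_zero_iff K p n).mpr hpn
  set φ := algebraMap K (AlgebraicClosure K) with hφ
  set f := fPoly n a with hf
  have hdeg : f.natDegree = n := natDegree_fPoly n hn a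
  have hco : f.coeff (n - 1) = a ⟨n - 2, by omega⟩ := coeff_fPoly_pred n hn a
  have hnL : (n : AlgebraicClosure K) = 0 := by rw [← map_natCast φ, hnK, map_zero]
  have hcoL : (f.map φ).coeff (n - 1) = φ (a ⟨n - 2, by omega⟩) := by rw [coeff_map, hco]
  have haL : φ (a ⟨n - 2, by omega⟩) ≠ 0 := (map_ne_zero φ).mpr ha
  have hs : (f.map φ).derivative.Splits := IsAlgClosed.splits _
  have hdegL : (f.map φ).natDegree = n := by rw [natDegree_map, hdeg]
  have key : (Dpoly f).map φ = (-1) ^ (n * (n - 1) / 2) * C (φ (a ⟨n - 2, by omega⟩)) ^ n *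
      ((f.derivative.aroots (AlgebraicClosure K)).map
        fun ρ => X + C (aeval ρ f)).prod := by
    rw [Dpoly_map, Dpoly_eq_prod_of_splits hn hnL (f.map φ) hdegL
      ((fPoly_monic n hn a).map φ) (by rw [hcoL]; exact haL) hs, hcoL, derivative_map, aroots]
    simp only [hφ, eval_map_algebraMap]
  refine ⟨key, ?_⟩
  have hcard : Multiset.card (f.derivative.aroots (AlgebraicClosure K)) = n - 2 := by
    obtain ⟨hle, hc⟩ := coeff_derivative_of_natCast_eq_zero hn hnK f hdeg
    rw [aroots, ← derivative_map, ← hs.natDegree_eq_card_roots, derivative_map, natDegree_map]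
    exact le_antisymm hle (le_natDegree_of_ne_zero (by rw [hc, hco]; exact neg_ne_zero.mpr ha))
  have hprod : ((f.derivative.aroots (AlgebraicClosure K)).map
      fun ρ => X + C (aeval ρ f)).prod.natDegree = n - 2 := by
    rw [natDegree_multiset_prod_of_monic]
    · simp [hcard]
    · intro q hq
      obtain ⟨ρ, -, rfl⟩ := Multiset.mem_map.mp hq
      exact monic_X_add_C _
  rw [← natDegree_map φ, key, ← C_1, ← C_neg, ← C_pow, ← C_pow, ← C_mul, natDegree_C_mul, hprod]
  exact mul_ne_zero (pow_ne_zero _ (neg_ne_zero.mpr one_ne_zero)) (pow_ne_zero _ haL)
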